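/- The Ellis enveloping semigroup E(Ω,φ) (with the topology of pointwise convergence) is metrizable if and only if the operator semigroup G(Ω,φ) (with the weak* operator topology) is metrizable. -/

import Mathlib

open MeasureTheory Filter Topology

/-- The pairing `⟨f, μ⟩ = ∫ f dμ` of a function with a finite signed Borel measure,
defined via the Jordan decomposition of the signed measure. -/
noncomputable def spair {Ω : Type*} [MeasurableSpace Ω] (f : Ω → ℝ) (μ : SignedMeasure Ω) : ℝ :=
  (∫ ω, f ω ∂μ.toJordanDecomposition.posPart) - (∫ ω, f ω ∂μ.toJordanDecomposition.negPart)

/-- The weak* topology on the space `X*` of finite signed Borel measures, i.e. the topology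
of convergence of the pairings with all continuous functions `x ∈ C(Ω, ℝ)`. With this topology
on the codomain, the product topology on `SignedMeasure Ω → SignedMeasure Ω` is precisely the
weak* operator topology (pointwise convergence with `X*` in its weak* topology). -/
noncomputable instance weakStarTopology {Ω : Type*} [TopologicalSpace Ω] [MeasurableSpace Ω] :
    TopologicalSpace (SignedMeasure Ω) :=
  TopologicalSpace.induced (fun μ => fun x : C(Ω, ℝ) => spair (⇑x) μ) inferInstance

/-- The operator `V : X* → X*`, pushforward by `φ`: `(Vμ)(e) = μ(φ⁻¹ e)`. -/
noncomputable def Vop {Ω : Type*} [MeasurableSpace Ω] (φ : Ω → Ω) :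
    SignedMeasure Ω → SignedMeasure Ω :=
  fun μ => μ.map φ

/-- The Dirac measure at `ω`, as a signed measure. -/
noncomputable def diracSM {Ω : Type*} [MeasurableSpace Ω] (ω : Ω) : SignedMeasure Ω :=
  (Measure.dirac ω).toSignedMeasure

/-- `Γ(Ω,φ)`: the closure of `{Vⁿ : n ≥ 0}` in the weak* operator topology. -/
def GammaSG {Ω : Type*} [TopologicalSpace Ω] [MeasurableSpace Ω] (φ : Ω → Ω) :
    Set (SignedMeasure Ω → SignedMeasure Ω) :=
  closure (Set.range fun n : ℕ => (Vop φ)^[n])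

/-- `G(Ω,φ)`: the closure of the convex hull of `{Vⁿ : n ≥ 0}` in the weak* operator topology. -/
def GSG {Ω : Type*} [TopologicalSpace Ω] [MeasurableSpace Ω] (φ : Ω → Ω) :
    Set (SignedMeasure Ω → SignedMeasure Ω) :=
  closure (convexHull ℝ (Set.range fun n : ℕ => (Vop φ)^[n]))

/-- The kernel `L = {Q ∈ G(Ω,φ) : V ∘ Q = Q}` of the semigroup `G(Ω,φ)`. -/
def Lker {Ω : Type*} [TopologicalSpace Ω] [MeasurableSpace Ω] (φ : Ω → Ω) :
    Set (SignedMeasure Ω → SignedMeasure Ω) :=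
  {Q ∈ GSG φ | Vop φ ∘ Q = Q}

/-- The Ellis enveloping semigroup `E(Ω,φ)`: the closure of the iterates `{φⁿ : n ≥ 0}`
in the product topology (pointwise convergence) on `Ω → Ω`. -/
def EllisE {Ω : Type*} [TopologicalSpace Ω] (φ : Ω → Ω) : Set (Ω → Ω) :=
  closure (Set.range fun n : ℕ => φ^[n])

/-- `E_b(Ω,φ)`: the smallest set of self-maps of `Ω` containing the iterates `{φⁿ : n ≥ 0}`
and sequentially closed under pointwise convergence. -/
inductive Eb {Ω : Type*} [TopologicalSpace Ω] (φ : Ω → Ω) : (Ω → Ω) → Prop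
  | iterate (n : ℕ) : Eb φ φ^[n]
  | lim (p : ℕ → Ω → Ω) (q : Ω → Ω) (hp : ∀ k, Eb φ (p k))
      (hq : ∀ ω, Tendsto (fun k => p k ω) atTop (𝓝 (q ω))) : Eb φ q

/-- `E₁(Ω,φ)`: the set of pointwise limits of sequences of iterates `φ^{n_k}`. -/
def E1SG {Ω : Type*} [TopologicalSpace Ω] (φ : Ω → Ω) : Set (Ω → Ω) :=
  {p | ∃ n : ℕ → ℕ, ∀ ω, Tendsto (fun k => φ^[n k] ω) atTop (𝓝 (p ω))}

/-- An operator `P ∈ Γ(Ω,φ)` with `p = πP` is regular if `p` is Borel measurable and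
`(Pμ)(e) = μ(p⁻¹ e)` for every Borel probability measure `μ` and Borel set `e`. -/
def RegularOperator {Ω : Type*} [TopologicalSpace Ω] [MeasurableSpace Ω]
    (P : SignedMeasure Ω → SignedMeasure Ω) (p : Ω → Ω) : Prop :=
  Measurable p ∧ ∀ (μ : Measure Ω) [IsProbabilityMeasure μ],
    ∀ e : Set Ω, MeasurableSet e → P μ.toSignedMeasure e = (μ (p ⁻¹' e)).toReal

/-- A minimal set of the semicascade `(Ω,φ)`: a nonempty closed `φ`-invariant set containing
no proper nonempty closed `φ`-invariant subset. -/
def IsMinimalSet {Ω : Type*} [TopologicalSpace Ω] (φ : Ω → Ω) (m : Set Ω) : Prop :=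
  m.Nonempty ∧ IsClosed m ∧ Set.MapsTo φ m m ∧
    ∀ m' ⊆ m, m'.Nonempty → IsClosed m' → Set.MapsTo φ m' m' → m' = m

/-- The orbit closure of a point `ω`: the closure of the trajectory `{φⁿ ω : n ≥ 0}`. -/
def orbitClosure {Ω : Type*} [TopologicalSpace Ω] (φ : Ω → Ω) (ω : Ω) : Set Ω :=
  closure (Set.range fun n : ℕ => φ^[n] ω)

/-- A `φ`-ergodic measure: a `φ`-invariant Borel probability measure `μ` such that
`μ(e) ∈ {0,1}` for every Borel set `e` with `φ⁻¹ e = e`. -/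
def IsErgodicMeasure {Ω : Type*} [MeasurableSpace Ω] (φ : Ω → Ω) (μ : Measure Ω) : Prop :=
  IsProbabilityMeasure μ ∧ (∀ e : Set Ω, MeasurableSet e → μ (φ ⁻¹' e) = μ e) ∧
    (∀ e : Set Ω, MeasurableSet e → φ ⁻¹' e = e → μ e = 0 ∨ μ e = 1)

/-- The support of a Borel measure: the smallest closed set of full measure
(the intersection of all closed sets of full measure). -/
def msupp {Ω : Type*} [TopologicalSpace Ω] [MeasurableSpace Ω] (μ : Measure Ω) : Set Ω :=
  ⋂₀ {s : Set Ω | IsClosed s ∧ μ sᶜ = 0}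

/-- The semicascade `(Ω,φ)` is tame: for every continuous `x` and every strictly increasing
sequence `n(1) < n(2) < ⋯`, the infimum over finitely supported real coefficients `a` with
`Σ|aₖ| = 1` of the sup-norms `‖Σₖ aₖ · (x ∘ φ^{n(k)})‖` is `0`. -/
def Tame {Ω : Type*} [TopologicalSpace Ω] [CompactSpace Ω] (φ : Ω → Ω)
    (hφ : Continuous φ) : Prop :=
  ∀ (x : C(Ω, ℝ)) (n : ℕ → ℕ), StrictMono n →
    sInf {r : ℝ | ∃ a : ℕ →₀ ℝ, (∑ k ∈ a.support, |a k|) = 1 ∧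
      r = ‖∑ k ∈ a.support, a k • x.comp ⟨φ^[n k], hφ.iterate (n k)⟩‖} = 0

/-- Points `a, b` are proximal: `inf_{n ≥ 0} d(φⁿ a, φⁿ b) = 0`. -/
def Proximal {Ω : Type*} [PseudoMetricSpace Ω] (φ : Ω → Ω) (a b : Ω) : Prop :=
  (⨅ n : ℕ, dist (φ^[n] a) (φ^[n] b)) = 0

variable {Ω : Type*} [TopologicalSpace Ω] [CompactSpace Ω] [TopologicalSpace.MetrizableSpace Ω]
  [Nonempty Ω] [MeasurableSpace Ω] [BorelSpace Ω]

/-!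
Let `T` be a set of measurable maps, `E` its pointwise closure and `G` the closed convex hull of the
pushforwards `f_*`, `f ∈ T`; both are compact, `G` by Banach–Alaoglu. If a family of continuous
functions on a compact space `S` separates points and its uniform distances are dominated by those
of a family in `C(K)` for a compact metrizable `K`, then a countable subfamily already separates
points, because `C(K)` is separable; hence `S` is metrizable.

For `f ∈ T` we have `⟨x, f_* μ⟩ = ∫ x ∘ f dμ`. By linearity and density, the functions
`Q ↦ ⟨x, Q μ⟩` on `G` are therefore dominated in this sense by the functions `p ↦ ∫ x ∘ p dμ` on
`E`. When `E` is metrizable, its elements are measurable as limits of sequences in `T`, and these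
functions are continuous by dominated convergence. Conversely, the functions `p ↦ x (p ω)` on `E`
are dominated by the functions `Q ↦ ⟨x, Q δ_ω⟩` on `G`.
-/

section Criterion

variable {S ι W : Type*} [TopologicalSpace S] [CompactSpace S] [MetricSpace W]

lemma metrizableSpace_of_dist_le_dist {M : Type*} [PseudoMetricSpace M]
    [TopologicalSpace.SeparableSpace M] {e : ι → S → W} (he : ∀ i, Continuous (e i))
    (hsep : Pairwise fun s t ↦ ∃ i, e i s ≠ e i t) (F : ι → M)
    (hF : ∀ i j s, dist (e i s) (e j s) ≤ dist (F i) (F j)) :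
    TopologicalSpace.MetrizableSpace S := by
  obtain ⟨D, hD, hD_countable, hD_dense⟩ :=
    (TopologicalSpace.IsSeparable.of_separableSpace (Set.range F)).exists_countable_dense_subset
  choose index hindex using fun m : D ↦ hD m.2
  have : Encodable D := hD_countable.toEncodable
  refine Metric.PiNatEmbed.TopologicalSpace.MetrizableSpace.of_countable_separating
    (fun m : D ↦ e (index m)) (fun m ↦ he (index m)) fun s t hst ↦ ?_
  obtain ⟨i, hi⟩ := hsep hst
  obtain ⟨m, hmD, hm⟩ := Metric.mem_closure_iff.1 (hD_dense ⟨i, rfl⟩) (dist (e i s) (e i t) / 2)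
    (half_pos (dist_pos.2 hi))
  set j := index ⟨m, hmD⟩
  have hj (r : S) : dist (e i r) (e j r) < dist (e i s) (e i t) / 2 :=
    (hF i j r).trans_lt (hindex ⟨m, hmD⟩ ▸ hm)
  refine ⟨⟨m, hmD⟩, fun heq : e j s = e j t ↦ ?_⟩
  linarith [hj s, heq ▸ hj t, dist_triangle_right (e i s) (e i t) (e j s)]

lemma metrizableSpace_of_uniform_dist_le {K Z : Type*} [TopologicalSpace K] [CompactSpace K]
    [TopologicalSpace.MetrizableSpace K] [PseudoMetricSpace Z] [SecondCountableTopology Z]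
    {e : ι → S → W} (he : ∀ i, Continuous (e i)) (hsep : Pairwise fun s t ↦ ∃ i, e i s ≠ e i t)
    {F : ι → K → Z} (hF : ∀ i, Continuous (F i))
    (hle : ∀ i j c, (∀ k, dist (F i k) (F j k) ≤ c) → ∀ s, dist (e i s) (e j s) ≤ c) :
    TopologicalSpace.MetrizableSpace S := by
  let := TopologicalSpace.metrizableSpaceMetric K
  exact metrizableSpace_of_dist_le_dist he hsep (fun i ↦ (⟨F i, hF i⟩ : C(K, Z))) fun i j ↦
    hle i j _ (ContinuousMap.dist_apply_le_dist (f := ⟨F i, hF i⟩) (g := ⟨F j, hF j⟩))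

end Criterion

lemma abs_le_of_mem_closure_convexHull {E : Type*} [AddCommGroup E] [Module ℝ E]
    [TopologicalSpace E] (L : E →L[ℝ] ℝ) {s : Set E} {c : ℝ} (h : ∀ v ∈ s, |L v| ≤ c) :
    ∀ v ∈ closure (convexHull ℝ s), |L v| ≤ c := by
  have hconvex : Convex ℝ {v | |L v| ≤ c} := by
    simpa [Set.preimage, Metric.closedBall, Real.dist_eq] using
      (convex_closedBall (0 : ℝ) c).linear_preimage L.toLinearMap
  exact closure_minimal (convexHull_min h hconvex)
    (isClosed_le (continuous_abs.comp L.continuous) continuous_const)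

section Variation

open scoped ENNReal

variable {X Y : Type*} [MeasurableSpace X] [MeasurableSpace Y]

instance isFiniteMeasure_variation (μ : SignedMeasure X) : IsFiniteMeasure μ.variation := by
  rw [← μ.totalVariation_eq_variation]
  infer_instance

lemma variation_map_univ_le (f : X → Y) (μ : SignedMeasure X) :
    (μ.map f).variation Set.univ ≤ μ.variation Set.univ := by
  by_cases hf : Measurable f
  · simpa [Measure.map_apply hf] using
      VectorMeasure.variation_map_le (μ := μ) (φ := f) Set.univ
  · simp [VectorMeasure.map, hf]

lemma convex_variation_univ_le (r : ℝ≥0∞) :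
    Convex ℝ {ν : SignedMeasure X | ν.variation Set.univ ≤ r} := by
  intro μ hμ ν hν a b ha hb hab
  calc (a • μ + b • ν).variation Set.univ
    _ ≤ ‖a‖ₑ * μ.variation Set.univ + ‖b‖ₑ * ν.variation Set.univ := by
        simpa [VectorMeasure.variation_smul, enorm_eq_nnnorm] using
          VectorMeasure.variation_add_le (μ := a • μ) (ν := b • ν) Set.univ
    _ ≤ ‖a‖ₑ * r + ‖b‖ₑ * r := by gcongr <;> assumption
    _ = r := by
        rw [← add_mul, Real.enorm_of_nonneg ha, Real.enorm_of_nonneg hb,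
          ← ENNReal.ofReal_add ha hb, hab, ENNReal.ofReal_one, one_mul]

end Variation

section Pairing

open scoped ENNReal NNReal

variable {X Y : Type*} [MeasurableSpace X] [TopologicalSpace Y] [MeasurableSpace Y]

lemma isInducing_spair :
    IsInducing fun (μ : SignedMeasure Y) (x : C(Y, ℝ)) ↦ spair x μ :=
  ⟨rfl⟩

instance r1Space_signedMeasure : R1Space (SignedMeasure Y) :=
  isInducing_spair.r1Space

lemma continuous_spair (x : C(Y, ℝ)) : Continuous (spair x : SignedMeasure Y → ℝ) :=
  (continuous_apply x).comp isInducing_spair.continuous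

lemma spair_eq_integral {f : X → ℝ} {μ : SignedMeasure X} (hf : μ.Integrable f) :
    spair f μ = ∫ᵛ ω, f ω ∂<•μ := by
  have hf' : Integrable f μ.totalVariation := μ.totalVariation_eq_variation ▸ hf
  have hpos : VectorMeasure.Integrable μ.toJordanDecomposition.posPart.toSignedMeasure f := by
    rw [VectorMeasure.Integrable, Measure.variation_toSignedMeasure]
    exact hf'.mono_measure (Measure.le_add_right le_rfl)
  have hneg : VectorMeasure.Integrable μ.toJordanDecomposition.negPart.toSignedMeasure f := by
    rw [VectorMeasure.Integrable, Measure.variation_toSignedMeasure]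
    exact hf'.mono_measure (Measure.le_add_left le_rfl)
  conv_rhs => rw [← μ.toSignedMeasure_toJordanDecomposition, JordanDecomposition.toSignedMeasure,
    VectorMeasure.integral_sub_vectorMeasure hpos hneg, VectorMeasure.integral_toSignedMeasure,
    VectorMeasure.integral_toSignedMeasure]
  rfl

variable [BorelSpace Y] [CompactSpace Y]

lemma integrable_continuousMap_comp (x : C(Y, ℝ)) {f : X → Y} (hf : Measurable f)
    (μ : SignedMeasure X) : μ.Integrable (x ∘ f) :=
  Integrable.of_bound (x.continuous.measurable.comp hf).aestronglyMeasurable ‖x‖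
    (.of_forall fun ω ↦ x.norm_coe_le_norm (f ω))

lemma integrable_continuousMap (x : C(Y, ℝ)) (μ : SignedMeasure Y) : μ.Integrable x :=
  integrable_continuousMap_comp x measurable_id μ

/-- The evaluation functional `μ ↦ ⟨x, μ⟩` on the dual of `C(Y, ℝ)`, continuous for the weak*
topology. -/
noncomputable def weakStarEval (x : C(Y, ℝ)) : SignedMeasure Y →L[ℝ] ℝ where
  toFun := spair x
  map_add' μ ν := by
    have hμ := integrable_continuousMap x μ
    have hν := integrable_continuousMap x ν
    rw [spair_eq_integral hμ, spair_eq_integral hν, spair_eq_integral (hμ.add_vectorMeasure hν),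
      VectorMeasure.integral_add_vectorMeasure hμ hν]
  map_smul' c μ := by
    have hμ := integrable_continuousMap x μ
    rw [spair_eq_integral hμ, spair_eq_integral (hμ.smul_vectorMeasure c),
      VectorMeasure.integral_smul_vectorMeasure, RingHom.id_apply]
  cont := continuous_spair x

@[simp]
lemma weakStarEval_apply (x : C(Y, ℝ)) (μ : SignedMeasure Y) : weakStarEval x μ = spair x μ :=
  rfl

lemma spair_map (x : C(Y, ℝ)) {f : X → Y} (hf : Measurable f) (μ : SignedMeasure X) :
    spair x (μ.map f) = spair (x ∘ f) μ := by
  rw [spair_eq_integral (integrable_continuousMap x _),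
    spair_eq_integral (integrable_continuousMap_comp x hf μ)]
  exact VectorMeasure.integral_map hf x.continuous.measurable.aestronglyMeasurable
    (integrable_continuousMap_comp x hf μ)

lemma spair_toSignedMeasure (x : C(Y, ℝ)) (μ : Measure Y) [IsFiniteMeasure μ] :
    spair x μ.toSignedMeasure = ∫ ω, x ω ∂μ := by
  rw [spair_eq_integral (integrable_continuousMap x _), VectorMeasure.integral_toSignedMeasure]

lemma spair_map_diracSM (x : C(Y, ℝ)) {f : X → Y} (hf : Measurable f) (ω : X) :
    spair x ((diracSM ω).map f) = x (f ω) := by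
  rw [spair_map x hf, spair_eq_integral (integrable_continuousMap_comp x hf _), diracSM,
    VectorMeasure.integral_toSignedMeasure]
  exact integral_dirac' _ _ (x.continuous.measurable.comp hf).stronglyMeasurable

lemma eq_of_forall_spair_eq [HasOuterApproxClosed Y] {μ ν : SignedMeasure Y}
    (h : ∀ x : C(Y, ℝ), spair x μ = spair x ν) : μ = ν := by
  have hzero (x : C(Y, ℝ)) : spair x (μ - ν) = 0 := by
    simpa [h x] using (weakStarEval x).map_sub μ ν
  have hparts : (μ - ν).toJordanDecomposition.posPart = (μ - ν).toJordanDecomposition.negPart :=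
    ext_of_forall_integral_eq_of_IsFiniteMeasure fun x ↦ sub_eq_zero.1 (hzero x.toContinuousMap)
  rw [← sub_eq_zero, ← (μ - ν).toSignedMeasure_toJordanDecomposition,
    JordanDecomposition.toSignedMeasure, sub_eq_zero]
  exact Measure.toSignedMeasure_congr hparts

lemma continuous_toSignedMeasure_sub_toSignedMeasure :
    Continuous fun p : FiniteMeasure Y × FiniteMeasure Y ↦
      (p.1 : Measure Y).toSignedMeasure - (p.2 : Measure Y).toSignedMeasure := by
  refine isInducing_spair.continuous_iff.2 (continuous_pi fun x ↦ ?_)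
  have hx := FiniteMeasure.continuous_integral_continuousMap (X := Y) x
  refine ((hx.comp continuous_fst).sub (hx.comp continuous_snd)).congr fun p ↦ ?_
  simp only [Pi.sub_apply, Function.comp_apply, ← spair_toSignedMeasure]
  exact ((weakStarEval x).map_sub _ _).symm

lemma isCompact_closure_variation_le [T2Space Y] {r : ℝ≥0∞} (hr : r ≠ ⊤) :
    IsCompact (closure {ν : SignedMeasure Y | ν.variation Set.univ ≤ r}) := by
  lift r to ℝ≥0 using hr
  have hmass : IsCompact {a : FiniteMeasure Y | a.mass ≤ r} :=
    isCompact_setOfPred_finiteMeasure_le_of_compactSpace Y r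
  refine ((hmass.prod hmass).image
    continuous_toSignedMeasure_sub_toSignedMeasure).closure_of_subset fun ν hν ↦ ?_
  rw [Set.mem_ofPred, ← ν.totalVariation_eq_variation] at hν
  refine ⟨(⟨ν.toJordanDecomposition.posPart, inferInstance⟩,
    ⟨ν.toJordanDecomposition.negPart, inferInstance⟩), ⟨?_, ?_⟩,
    ν.toSignedMeasure_toJordanDecomposition⟩
  · rw [Set.mem_ofPred, ← ENNReal.coe_le_coe, FiniteMeasure.ennreal_mass]
    exact (Measure.le_add_right le_rfl Set.univ).trans hν
  · rw [Set.mem_ofPred, ← ENNReal.coe_le_coe, FiniteMeasure.ennreal_mass]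
    exact (Measure.le_add_left le_rfl Set.univ).trans hν

end Pairing

section PushforwardHull

variable {X Y : Type*} [MeasurableSpace X] [TopologicalSpace Y] [MeasurableSpace Y]

/-- The weak* operator closure of the convex hull of the pushforward operators `μ ↦ f_* μ`, for
`f` in a set `T` of maps `X → Y`. For `T` the set of iterates of a map `φ` this is `G(Ω, φ)`. A
non-measurable `f` contributes the zero operator. -/
def pushforwardHull (T : Set (X → Y)) : Set (SignedMeasure X → SignedMeasure Y) :=
  closure (convexHull ℝ ((fun f μ ↦ μ.map f) '' T))

variable [BorelSpace Y] [CompactSpace Y]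

lemma isCompact_pushforwardHull [T2Space Y] (T : Set (X → Y)) :
    IsCompact (pushforwardHull T) := by
  let ball (μ : SignedMeasure X) : Set (SignedMeasure Y) :=
    {ν | ν.variation Set.univ ≤ μ.variation Set.univ}
  have hcompact : IsCompact (Set.univ.pi fun μ ↦ closure (ball μ)) :=
    isCompact_univ_pi fun μ ↦ isCompact_closure_variation_le (measure_ne_top _ _)
  have hsub : convexHull ℝ ((fun f μ ↦ μ.map f) '' T) ⊆ Set.univ.pi ball :=
    convexHull_min (Set.image_subset_iff.2 fun f _ μ _ ↦ variation_map_univ_le f μ)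
      (convex_pi fun μ _ ↦ convex_variation_univ_le _)
  exact hcompact.closure_of_subset (hsub.trans (Set.pi_mono fun μ _ ↦ subset_closure))

instance compactSpace_pushforwardHull [T2Space Y] (T : Set (X → Y)) :
    CompactSpace (pushforwardHull T) :=
  isCompact_iff_compactSpace.1 (isCompact_pushforwardHull T)

end PushforwardHull

section PointwiseClosure

variable {X Y : Type*} [MeasurableSpace X] [TopologicalSpace Y] [MeasurableSpace Y] [BorelSpace Y]
  {T : Set (X → Y)}

lemma measurable_of_mem_closure [TopologicalSpace.PseudoMetrizableSpace Y]
    [FrechetUrysohnSpace (closure T)] (hT : ∀ f ∈ T, Measurable f) :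
    ∀ p ∈ closure T, Measurable p := by
  intro p hp
  have hdense : (⟨p, hp⟩ : closure T) ∈ closure (Subtype.val ⁻¹' T) := by
    rwa [closure_subtype, Subtype.image_preimage_coe, Set.inter_eq_right.2 subset_closure]
  obtain ⟨f, hfT, hf⟩ := mem_closure_iff_seq_limit.1 hdense
  exact measurable_of_tendsto_metrizable (fun n ↦ hT (f n) (hfT n))
    ((continuous_subtype_val.tendsto _).comp hf)

lemma continuous_spair_comp [CompactSpace Y] [FirstCountableTopology T]
    (hT : ∀ f ∈ T, Measurable f) (x : C(Y, ℝ)) (μ : SignedMeasure X) :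
    Continuous fun p : T ↦ spair (x ∘ p.1) μ := by
  have hint (p : T) := integrable_continuousMap_comp x (hT p p.2) μ
  simp only [fun p ↦ spair_eq_integral (hint p)]
  exact VectorMeasure.continuous_of_dominated (fun p ↦ (hint p).aestronglyMeasurable)
    (fun p ↦ .of_forall fun ω ↦ x.norm_coe_le_norm (p.1 ω)) (integrable_const ‖x‖)
    (.of_forall fun ω ↦ x.continuous.comp ((continuous_apply ω).comp continuous_subtype_val))

end PointwiseClosure

section Metrizability

variable {X Y : Type*} [MeasurableSpace X] [TopologicalSpace Y] [CompactSpace Y]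
  [TopologicalSpace.MetrizableSpace Y] [MeasurableSpace Y] [BorelSpace Y] {T : Set (X → Y)}

lemma metrizableSpace_pushforwardHull_of_closure
    [TopologicalSpace.MetrizableSpace (closure T)] (hT : ∀ f ∈ T, Measurable f) :
    TopologicalSpace.MetrizableSpace (pushforwardHull T) := by
  have hmeas := measurable_of_mem_closure hT
  have : CompactSpace (closure T) := isCompact_iff_compactSpace.1 isClosed_closure.isCompact
  let eval (i : C(Y, ℝ) × SignedMeasure X) : (SignedMeasure X → SignedMeasure Y) →L[ℝ] ℝ :=
    (weakStarEval i.1).comp (.proj i.2)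
  refine metrizableSpace_of_uniform_dist_le
    (e := fun i Q ↦ eval i Q.1)
    (F := fun (i : C(Y, ℝ) × SignedMeasure X) (p : closure T) ↦ spair (i.1 ∘ p.1) i.2)
    (fun i ↦ (eval i).continuous.comp continuous_subtype_val) (fun P Q hPQ ↦ ?_)
    (fun i ↦ continuous_spair_comp hmeas i.1 i.2) fun i j c hc Q ↦ ?_
  · by_contra! h
    exact hPQ (Subtype.ext (funext fun μ ↦ eq_of_forall_spair_eq fun x ↦ h (x, μ)))
  · refine abs_le_of_mem_closure_convexHull (eval i - eval j) ?_ Q Q.2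
    rintro _ ⟨f, hf, rfl⟩
    simpa [eval, spair_map _ (hT f hf), Real.dist_eq] using hc ⟨f, subset_closure hf⟩

lemma metrizableSpace_closure_of_pushforwardHull
    [TopologicalSpace.MetrizableSpace (pushforwardHull T)] (hT : ∀ f ∈ T, Measurable f) :
    TopologicalSpace.MetrizableSpace (closure T) := by
  have : CompactSpace (closure T) := isCompact_iff_compactSpace.1 isClosed_closure.isCompact
  have heval (i : C(Y, ℝ) × X) : Continuous fun p : X → Y ↦ i.1 (p i.2) :=
    i.1.continuous.comp (continuous_apply i.2)
  refine metrizableSpace_of_uniform_dist_le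
    (e := fun (i : C(Y, ℝ) × X) (p : closure T) ↦ i.1 (p.1 i.2))
    (F := fun i (Q : pushforwardHull T) ↦ spair i.1 (Q.1 (diracSM i.2)))
    (fun i ↦ (heval i).comp continuous_subtype_val) (fun p q hpq ↦ ?_)
    (fun i ↦ (continuous_spair i.1).comp ((continuous_apply _).comp continuous_subtype_val))
    fun i j c hc p ↦ ?_
  · obtain ⟨ω, hω⟩ := Function.ne_iff.1 (Subtype.coe_ne_coe.2 hpq)
    obtain ⟨x, hx, hne⟩ := separatesPoints_continuous_of_t35Space hω
    exact ⟨(⟨x, hx⟩, ω), hne⟩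
  · refine closure_minimal (fun f hf ↦ ?_)
      (isClosed_le ((heval i).dist (heval j)) continuous_const) p.2
    simpa [spair_map_diracSM _ (hT f hf)] using
      hc ⟨_, subset_closure (subset_convexHull ℝ _ ⟨f, hf, rfl⟩)⟩

theorem stmt_7_general (hT : ∀ f ∈ T, Measurable f) :
    TopologicalSpace.MetrizableSpace (closure T) ↔
      TopologicalSpace.MetrizableSpace (pushforwardHull T) :=
  ⟨fun _ ↦ metrizableSpace_pushforwardHull_of_closure hT,
    fun _ ↦ metrizableSpace_closure_of_pushforwardHull hT⟩

end Metrizability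

lemma Vop_comp {X : Type*} [MeasurableSpace X] {f g : X → X} (hf : Measurable f)
    (hg : Measurable g) : Vop (f ∘ g) = Vop f ∘ Vop g := by
  ext μ s hs
  simp only [Vop, Function.comp_apply, VectorMeasure.map_apply, hf, hg, hf.comp hg, hf hs, hs,
    Set.preimage_comp]

lemma Vop_iterate {X : Type*} [MeasurableSpace X] {f : X → X} (hf : Measurable f) (n : ℕ) :
    (Vop f)^[n] = Vop f^[n] := by
  induction n with
  | zero => exact funext fun μ ↦ (VectorMeasure.map_id μ).symm
  | succ n ih => rw [Function.iterate_succ', ih, Function.iterate_succ', Vop_comp hf (hf.iterate n)]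

lemma GSG_eq_pushforwardHull {X : Type*} [TopologicalSpace X] [MeasurableSpace X] {f : X → X}
    (hf : Measurable f) : GSG f = pushforwardHull (Set.range fun n : ℕ ↦ f^[n]) := by
  simp only [GSG, pushforwardHull, Vop_iterate hf, ← Set.range_comp]
  rfl

/-- (a1) ⇔ (c1): the Ellis enveloping semigroup `E(Ω,φ)` (topology of pointwise convergence)
is metrizable iff the operator semigroup `G(Ω,φ)` (weak* operator topology) is metrizable. -/
theorem stmt_7 (φ : Ω → Ω) (hφ : Continuous φ) :
    TopologicalSpace.MetrizableSpace (EllisE φ) ↔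
      TopologicalSpace.MetrizableSpace (GSG φ) := by
  rw [GSG_eq_pushforwardHull hφ.measurable]
  exact stmt_7_general (Set.forall_mem_range.2 fun n ↦ hφ.measurable.iterate n)
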